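/- arXiv:2403.12725 — 10 statements merged into one kernel-verified Lean document; each statement's English description precedes it below -/
import Mathlib

section
/- Let f be a discrete Morse function on an abstract simplicial complex K. Then for every simplex σ ∈ K it is impossible that both of the following hold: there exists β ∈ K with σ ⋖ β and f(β) ≤ f(σ), and there exists α ∈ K with α ⋖ σ and f(α) ≥ f(σ). Consequently, every non-critical simplex of K satisfies exactly one of the two exceptional conditions. -/
/-- An abstract simplicial complex on a vertex type `V`: a set of nonempty finite
subsets (simplices) closed under passing to nonempty subsets. -/
def IsComplex {V : Type*} (K : Set (Finset V)) : Prop :=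
  (∀ σ ∈ K, σ.Nonempty) ∧ ∀ σ ∈ K, ∀ τ : Finset V, τ ⊆ σ → τ.Nonempty → τ ∈ K

/-- `α ⋖ β` : `α` is a codimension-one face of `β`. -/
def CodimOneFace {V : Type*} (a b : Finset V) : Prop :=
  a ⊆ b ∧ b.card = a.card + 1

/-- A discrete Morse function on `K`: for every simplex `σ ∈ K`, at most one
codimension-one coface with no larger value, and at most one codimension-one face
with no smaller value. -/
def IsDiscreteMorse {V : Type*} (K : Set (Finset V)) (f : Finset V → ℝ) : Prop :=
  ∀ σ ∈ K,
    {β | β ∈ K ∧ CodimOneFace σ β ∧ f β ≤ f σ}.Subsingleton ∧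
    {a | a ∈ K ∧ CodimOneFace a σ ∧ f σ ≤ f a}.Subsingleton

/-- A simplex `σ` is critical for `f` if both exceptional sets are empty. -/
def IsCriticalSimplex {V : Type*} (K : Set (Finset V)) (f : Finset V → ℝ)
    (σ : Finset V) : Prop :=
  σ ∈ K ∧
    {β | β ∈ K ∧ CodimOneFace σ β ∧ f β ≤ f σ} = ∅ ∧
    {a | a ∈ K ∧ CodimOneFace a σ ∧ f σ ≤ f a} = ∅

/-- A discrete vector field on `K`: a set of pairs `(α, β)` of simplices of `K`
with `α ⋖ β` such that each simplex belongs to at most one pair. -/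
def IsDVF {V : Type*} (K : Set (Finset V)) (W : Set (Finset V × Finset V)) : Prop :=
  (∀ p ∈ W, p.1 ∈ K ∧ p.2 ∈ K ∧ CodimOneFace p.1 p.2) ∧
  ∀ σ ∈ K, {p | p ∈ W ∧ (p.1 = σ ∨ p.2 = σ)}.Subsingleton

/-- The gradient vector field of a discrete Morse function `f` on `K`. -/
def gradVF {V : Type*} (K : Set (Finset V)) (f : Finset V → ℝ) :
    Set (Finset V × Finset V) :=
  {p | p.1 ∈ K ∧ p.2 ∈ K ∧ CodimOneFace p.1 p.2 ∧ f p.2 ≤ f p.1}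

/-- A `V`-path `α_0, β_0, α_1, …, β_{r-1}, α_r` for a discrete vector field `W`. -/
def IsVPath {V : Type*} (K : Set (Finset V)) (W : Set (Finset V × Finset V)) {r : ℕ}
    (a : Fin (r + 1) → Finset V) (b : Fin r → Finset V) : Prop :=
  (∀ i, a i ∈ K) ∧ (∀ i, b i ∈ K) ∧
  ∀ i : Fin r, (a i.castSucc, b i) ∈ W ∧ CodimOneFace (a i.succ) (b i) ∧
    a i.succ ≠ a i.castSucc

/-- `W` admits no nontrivial closed `V`-path. -/
def NoClosedVPath {V : Type*} (K : Set (Finset V))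
    (W : Set (Finset V × Finset V)) : Prop :=
  ∀ r : ℕ, 0 < r → ∀ a : Fin (r + 1) → Finset V, ∀ b : Fin r → Finset V,
    IsVPath K W a b → a (Fin.last r) ≠ a 0

/-! If `α ⋖ σ ⋖ β`, the interval `[α, β]` of the face poset contains a second intermediate simplex
`τ`. Were both exceptional conditions to hold at `σ` through `β` and `α`, then `σ` would be the one
exceptional coface of `α` and the one exceptional face of `β`. As `τ` is neither,
`f α < f τ < f β ≤ f σ ≤ f α`. -/

section Poset

variable {P R : Type*}

/-- The diamond property: whenever `s` lies strictly between the ends of an interval of length two,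
that interval has another intermediate element. Uniqueness of the latter, often included, is not
part of the definition. -/
def HasDiamondProperty (P : Type*) [LT P] : Prop :=
  ∀ ⦃a s b : P⦄, a ⋖ s → s ⋖ b → ∃ t, t ≠ s ∧ a ⋖ t ∧ t ⋖ b

/-- The cells of `K` covering `s` at which `f` fails to increase; covering in the ambient poset `P`
plays the role of having codimension one. -/
def exceptionalCofaces [LT P] [LE R] (K : Set P) (f : P → R) (s : P) : Set P :=
  {b | b ∈ K ∧ s ⋖ b ∧ f b ≤ f s}

/-- The cells of `K` covered by `s` from which `f` fails to increase to `s`. -/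
def exceptionalFaces [LT P] [LE R] (K : Set P) (f : P → R) (s : P) : Set P :=
  {a | a ∈ K ∧ a ⋖ s ∧ f s ≤ f a}

/-- Forman's definition of a discrete Morse function, for a set `K` of cells in a poset. -/
def IsDiscreteMorseOn [LT P] [LE R] (K : Set P) (f : P → R) : Prop :=
  ∀ s ∈ K, (exceptionalCofaces K f s).Subsingleton ∧ (exceptionalFaces K f s).Subsingleton

/-- Critical cells of a function on a set `K` of cells in a poset. -/
def IsCriticalOn [LT P] [LE R] (K : Set P) (f : P → R) (s : P) : Prop :=
  s ∈ K ∧ exceptionalCofaces K f s = ∅ ∧ exceptionalFaces K f s = ∅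

theorem nonempty_cofaces_or_nonempty_faces_of_not_isCriticalOn [LT P] [LE R] {K : Set P}
    {f : P → R} {s : P} (hs : s ∈ K) (hcrit : ¬ IsCriticalOn K f s) :
    (exceptionalCofaces K f s).Nonempty ∨ (exceptionalFaces K f s).Nonempty := by
  simpa only [IsCriticalOn, hs, true_and, not_and_or, ← Set.nonempty_iff_ne_empty] using hcrit

theorem HasDiamondProperty.of_generalizedBooleanAlgebra [GeneralizedBooleanAlgebra P] :
    HasDiamondProperty P := by
  intro a s b has hsb
  -- `t` is the complement of `s` in the interval `[a, b]`.
  let t := a ⊔ b \ s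
  have inf_eq : s ⊓ t = a := by
    rw [inf_sup_left, inf_sdiff_self_right, sup_bot_eq, inf_eq_right.2 has.le]
  have sup_eq : s ⊔ t = b := by
    rw [← sup_assoc, sup_eq_left.2 has.le, sup_sdiff_cancel_right hsb.le]
  refine ⟨t, fun hts => ?_, ?_, ?_⟩
  · rw [hts, inf_idem] at inf_eq
    exact has.ne' inf_eq
  · rw [← inf_eq]
    exact inf_covBy_of_covBy_sup_left (by rwa [sup_eq])
  · rw [← sup_eq]
    exact covBy_sup_of_inf_covBy_left (by rwa [inf_eq])

variable [Preorder P] [LinearOrder R] {K : Set P} {f : P → R} {s : P}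

theorem IsDiscreteMorseOn.not_nonempty_cofaces_and_nonempty_faces (hf : IsDiscreteMorseOn K f)
    (hP : HasDiamondProperty P) (hK : K.OrdConnected) (hs : s ∈ K) :
    ¬ ((exceptionalCofaces K f s).Nonempty ∧ (exceptionalFaces K f s).Nonempty) := by
  rintro ⟨⟨b, hb, hsb, hfbs⟩, ⟨a, ha, has, hfsa⟩⟩
  obtain ⟨t, hts, hat, htb⟩ := hP has hsb
  have ht : t ∈ K := hK.out ha hb ⟨hat.le, htb.le⟩
  have hfat : f a < f t :=
    lt_of_not_ge fun hfta => hts ((hf a ha).1 ⟨ht, hat, hfta⟩ ⟨hs, has, hfsa⟩)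
  have hftb : f t < f b :=
    lt_of_not_ge fun hfbt => hts ((hf b hb).2 ⟨ht, htb, hfbt⟩ ⟨hs, hsb, hfbs⟩)
  exact lt_irrefl (f a) <| calc
    f a < f t := hfat
    _ < f b := hftb
    _ ≤ f s := hfbs
    _ ≤ f a := hfsa

theorem discreteMorse_not_both_exceptional_general (hP : HasDiamondProperty P)
    (hK : K.OrdConnected) (hf : IsDiscreteMorseOn K f) :
    (∀ s ∈ K, ¬ ((exceptionalCofaces K f s).Nonempty ∧ (exceptionalFaces K f s).Nonempty)) ∧
    (∀ s ∈ K, ¬ IsCriticalOn K f s →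
      Xor (exceptionalCofaces K f s).Nonempty (exceptionalFaces K f s).Nonempty) := by
  have not_both := fun s (hs : s ∈ K) => hf.not_nonempty_cofaces_and_nonempty_faces hP hK hs
  exact ⟨not_both, fun s hs hcrit => (xor_iff_or_and_not_and _ _).2
    ⟨nonempty_cofaces_or_nonempty_faces_of_not_isCriticalOn hs hcrit, not_both s hs⟩⟩

end Poset

section SimplicialComplex

variable {V : Type*} {K : Set (Finset V)} {f : Finset V → ℝ}

theorem HasDiamondProperty.finset : HasDiamondProperty (Finset V) := by
  classical exact .of_generalizedBooleanAlgebra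

theorem IsComplex.ordConnected (hK : IsComplex K) : K.OrdConnected :=
  ⟨fun _ hα _ hβ _ hτ => hK.2 _ hβ _ hτ.2 ((hK.1 _ hα).mono hτ.1)⟩

theorem codimOneFace_iff_covBy {α β : Finset V} : CodimOneFace α β ↔ α ⋖ β := by
  classical
  rw [CodimOneFace, Finset.covBy_iff_card_sdiff_eq_one]
  refine and_congr_right fun hαβ => ?_
  have card_add := Finset.card_sdiff_add_card_eq_card hαβ
  omega

theorem isDiscreteMorse_iff_isDiscreteMorseOn : IsDiscreteMorse K f ↔ IsDiscreteMorseOn K f := by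
  simp only [IsDiscreteMorse, codimOneFace_iff_covBy, IsDiscreteMorseOn, exceptionalCofaces,
    exceptionalFaces]

theorem isCriticalSimplex_iff_isCriticalOn {σ : Finset V} :
    IsCriticalSimplex K f σ ↔ IsCriticalOn K f σ := by
  simp only [IsCriticalSimplex, codimOneFace_iff_covBy, IsCriticalOn, exceptionalCofaces,
    exceptionalFaces]

end SimplicialComplex

/-- for a discrete Morse function, no simplex satisfies both exceptional
conditions; consequently every non-critical simplex satisfies exactly one of them. -/
theorem discreteMorse_not_both_exceptional {V : Type*} (K : Set (Finset V))
    (hK : IsComplex K) (f : Finset V → ℝ) (hf : IsDiscreteMorse K f) :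
    (∀ σ ∈ K, ¬ ((∃ β ∈ K, CodimOneFace σ β ∧ f β ≤ f σ) ∧
        (∃ a ∈ K, CodimOneFace a σ ∧ f σ ≤ f a))) ∧
    (∀ σ ∈ K, ¬ IsCriticalSimplex K f σ →
      Xor' (∃ β ∈ K, CodimOneFace σ β ∧ f β ≤ f σ)
        (∃ a ∈ K, CodimOneFace a σ ∧ f σ ≤ f a)) := by
  simp only [codimOneFace_iff_covBy, isCriticalSimplex_iff_isCriticalOn]
  exact discreteMorse_not_both_exceptional_general .finset hK.ordConnected
    (isDiscreteMorse_iff_isDiscreteMorseOn.1 hf)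
end

section
/- Let f be a discrete Morse function on an abstract simplicial complex K. Then V_f = {(α, β) : α ⋖ β and f(β) ≤ f(α)} is a discrete vector field on K, i.e., each simplex of K belongs to at most one pair of V_f; moreover, a simplex σ ∈ K is critical for f if and only if σ belongs to no pair of V_f. -/
/-! If `α ⋖ σ ⋖ β`, there is a second simplex `τ ≠ σ` with `α ⋖ τ ⋖ β`. Were both pairs `(α, σ)` and
`(σ, β)` in the gradient field, the Morse condition at `α` and at `β` would leave `τ` unexceptional
at both, giving `f σ ≤ f α < f τ < f β ≤ f σ`. Hence no simplex is the upper end of one pair and the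
lower end of another; two pairs sharing an upper end, or sharing a lower end, coincide directly by
the Morse condition. -/

section GradientField

variable {V : Type*} {K : Set (Finset V)} {f : Finset V → ℝ} {α σ β : Finset V}

theorem IsComplex.ordConnected_s1 (hK : IsComplex K) : K.OrdConnected where
  out' α hα β hβ τ hτ := hK.2 β hβ τ hτ.2 ((hK.1 α hα).mono hτ.1)

theorem CodimOneFace.exists_ne_between (hασ : CodimOneFace α σ) (hσβ : CodimOneFace σ β) :
    ∃ τ ≠ σ, CodimOneFace α τ ∧ CodimOneFace τ β := by
  classical
  obtain ⟨hασ, hσ_card⟩ := hασ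
  obtain ⟨hσβ, hβ_card⟩ := hσβ
  have hσβ_ne : σ ≠ β := by
    rintro rfl
    omega
  obtain ⟨v, hvβ, hvσ⟩ := Finset.exists_of_ssubset (hσβ.ssubset_of_ne hσβ_ne)
  have hα_insert : (insert v α).card = α.card + 1 :=
    Finset.card_insert_of_notMem fun hvα => hvσ (hασ hvα)
  refine ⟨insert v α, ?_, ⟨Finset.subset_insert v α, hα_insert⟩,
    Finset.insert_subset hvβ (hασ.trans hσβ), by omega⟩
  rintro rfl
  exact hvσ (Finset.mem_insert_self v α)

theorem IsDiscreteMorse.lt_coface_of_le_face (hf : IsDiscreteMorse K f) (hK : K.OrdConnected)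
    (hα : α ∈ K) (hβ : β ∈ K) (hασ : CodimOneFace α σ) (hσβ : CodimOneFace σ β)
    (hle : f σ ≤ f α) : f σ < f β := by
  by_contra! hβσ
  obtain ⟨τ, hτσ, hατ, hτβ⟩ := hασ.exists_ne_between hσβ
  have hσ : σ ∈ K := hK.out hα hβ ⟨hασ.1, hσβ.1⟩
  have hτ : τ ∈ K := hK.out hα hβ ⟨hατ.1, hτβ.1⟩
  have hατ_lt : f α < f τ := by
    by_contra! h
    exact hτσ ((hf α hα).1 ⟨hτ, hατ, h⟩ ⟨hσ, hασ, hle⟩)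
  have hτβ_lt : f τ < f β := by
    by_contra! h
    exact hτσ ((hf β hβ).2 ⟨hτ, hτβ, h⟩ ⟨hσ, hσβ, hβσ⟩)
  have hσσ : f σ < f σ := calc
    f σ ≤ f α := hle
    _ < f τ := hατ_lt
    _ < f β := hτβ_lt
    _ ≤ f σ := hβσ
  exact lt_irrefl _ hσσ

theorem IsDiscreteMorse.isDVF_gradVF (hf : IsDiscreteMorse K f) (hK : K.OrdConnected) :
    IsDVF K (gradVF K f) := by
  refine ⟨fun p ⟨hα, hβ, hαβ, _⟩ => ⟨hα, hβ, hαβ⟩, ?_⟩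
  rintro σ hσ ⟨α, β⟩ ⟨⟨hα, hβ, hαβ, hle⟩, hσ_end⟩ ⟨γ, δ⟩ ⟨⟨hγ, hδ, hγδ, hle'⟩, hσ_end'⟩
  dsimp only at *
  rcases hσ_end with rfl | rfl <;> rcases hσ_end' with rfl | rfl
  · rw [(hf _ hσ).1 ⟨hβ, hαβ, hle⟩ ⟨hδ, hγδ, hle'⟩]
  · exact absurd hle (hf.lt_coface_of_le_face hK hγ hβ hγδ hαβ hle').not_ge
  · exact absurd hle' (hf.lt_coface_of_le_face hK hα hδ hαβ hγδ hle).not_ge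
  · rw [(hf _ hσ).2 ⟨hα, hαβ, hle⟩ ⟨hγ, hγδ, hle'⟩]

theorem isCriticalSimplex_iff_forall_mem_gradVF (hσ : σ ∈ K) :
    IsCriticalSimplex K f σ ↔ ∀ p ∈ gradVF K f, p.1 ≠ σ ∧ p.2 ≠ σ := by
  simp only [IsCriticalSimplex, Set.eq_empty_iff_forall_notMem]
  constructor
  · rintro ⟨-, hcoface, hface⟩ ⟨α, β⟩ ⟨hα, hβ, hαβ, hle⟩
    constructor
    · rintro rfl
      exact hcoface β ⟨hβ, hαβ, hle⟩
    · rintro rfl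
      exact hface α ⟨hα, hαβ, hle⟩
  · intro hunpaired
    refine ⟨hσ, ?_, ?_⟩
    · rintro β ⟨hβ, hσβ, hle⟩
      exact (hunpaired (σ, β) ⟨hσ, hβ, hσβ, hle⟩).1 rfl
    · rintro α ⟨hα, hασ, hle⟩
      exact (hunpaired (α, σ) ⟨hα, hσ, hασ, hle⟩).2 rfl

theorem gradVF_isDVF_and_critical_iff_general (hK : K.OrdConnected) (hf : IsDiscreteMorse K f) :
    IsDVF K (gradVF K f) ∧
    ∀ σ ∈ K, (IsCriticalSimplex K f σ ↔
      ∀ p ∈ gradVF K f, p.1 ≠ σ ∧ p.2 ≠ σ) :=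
  ⟨hf.isDVF_gradVF hK, fun _ hσ => isCriticalSimplex_iff_forall_mem_gradVF hσ⟩

end GradientField

/-- the gradient vector field of a discrete Morse function is a discrete
vector field, and a simplex is critical iff it belongs to no pair of it. -/
theorem gradVF_isDVF_and_critical_iff {V : Type*} (K : Set (Finset V))
    (hK : IsComplex K) (f : Finset V → ℝ) (hf : IsDiscreteMorse K f) :
    IsDVF K (gradVF K f) ∧
    ∀ σ ∈ K, (IsCriticalSimplex K f σ ↔
      ∀ p ∈ gradVF K f, p.1 ≠ σ ∧ p.2 ≠ σ) :=
  gradVF_isDVF_and_critical_iff_general hK.ordConnected_s1 hf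
end

section
/- (Forman, Theorem 3.4) Let f be a discrete Morse function on an abstract simplicial complex K with gradient vector field V_f. Suppose α_0, β_0, α_1, β_1, …, β_{r−1}, α_r are simplices of K with α_i ⋖ β_i, α_{i+1} ⋖ β_i, and α_i ≠ α_{i+1} for all 0 ≤ i ≤ r−1. Then (α_i, β_i) ∈ V_f for all i (i.e., the sequence is a V_f-path) if and only if f(α_0) ≥ f(β_0) > f(α_1) ≥ f(β_1) > ⋯ ≥ f(β_{r−1}) > f(α_r). -/
section GradientPaths

variable {V : Type*} {K : Set (Finset V)} {f : Finset V → ℝ} {α α' β : Finset V}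

theorem mem_gradVF_iff_le (hα : α ∈ K) (hβ : β ∈ K) (hαβ : CodimOneFace α β) :
    (α, β) ∈ gradVF K f ↔ f β ≤ f α :=
  ⟨fun hmem => hmem.2.2.2, fun hle => ⟨hα, hβ, hαβ, hle⟩⟩

theorem IsDiscreteMorse.lt_of_le_of_face_ne (hf : IsDiscreteMorse K f)
    (hα : α ∈ K) (hα' : α' ∈ K) (hβ : β ∈ K)
    (hαβ : CodimOneFace α β) (hα'β : CodimOneFace α' β) (hne : α' ≠ α)
    (hle : f β ≤ f α) : f α' < f β := by
  by_contra! hle'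
  have exceptional_face_unique := (hf β hβ).2
  exact hne (exceptional_face_unique ⟨hα', hα'β, hle'⟩ ⟨hα, hαβ, hle⟩)

theorem gradVF_path_iff_decreasing_general (hf : IsDiscreteMorse K f) {r : ℕ}
    {a : Fin (r + 1) → Finset V} {b : Fin r → Finset V}
    (ha : ∀ i, a i ∈ K) (hb : ∀ i, b i ∈ K)
    (hab : ∀ i : Fin r, CodimOneFace (a i.castSucc) (b i))
    (hab' : ∀ i : Fin r, CodimOneFace (a i.succ) (b i))
    (hne : ∀ i : Fin r, a i.succ ≠ a i.castSucc) :
    (∀ i : Fin r, (a i.castSucc, b i) ∈ gradVF K f) ↔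
    (∀ i : Fin r, f (b i) ≤ f (a i.castSucc) ∧ f (a i.succ) < f (b i)) := by
  refine forall_congr' fun i => ?_
  rw [mem_gradVF_iff_le (ha _) (hb i) (hab i), iff_self_and]
  exact hf.lt_of_le_of_face_ne (ha _) (ha _) (hb i) (hab i) (hab' i) (hne i)

end GradientPaths

/-- Forman, Theorem 3.4: a sequence of simplices with
`α_i ⋖ β_i`, `α_{i+1} ⋖ β_i` and `α_i ≠ α_{i+1}` is a `V_f`-path iff
`f(α_0) ≥ f(β_0) > f(α_1) ≥ f(β_1) > ⋯ ≥ f(β_{r-1}) > f(α_r)`. -/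
theorem gradVF_path_iff_decreasing {V : Type*} (K : Set (Finset V))
    (hK : IsComplex K) (f : Finset V → ℝ) (hf : IsDiscreteMorse K f) (r : ℕ)
    (a : Fin (r + 1) → Finset V) (b : Fin r → Finset V)
    (ha : ∀ i, a i ∈ K) (hb : ∀ i, b i ∈ K)
    (hab : ∀ i : Fin r, CodimOneFace (a i.castSucc) (b i))
    (hab' : ∀ i : Fin r, CodimOneFace (a i.succ) (b i))
    (hne : ∀ i : Fin r, a i.succ ≠ a i.castSucc) :
    (∀ i : Fin r, (a i.castSucc, b i) ∈ gradVF K f) ↔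
    (∀ i : Fin r, f (b i) ≤ f (a i.castSucc) ∧ f (a i.succ) < f (b i)) :=
  gradVF_path_iff_decreasing_general hf ha hb hab hab' hne
end

section
/- Let f be a discrete Morse function on an abstract simplicial complex K. Then the gradient vector field V_f = {(α, β) : α ⋖ β and f(β) ≤ f(α)} admits no nontrivial closed V-path. -/
section

variable {V : Type*} {K : Set (Finset V)}

theorem IsVPath.strictAnti_comp {P : Type*} [Preorder P] {φ : Finset V → P}
    {W : Set (Finset V × Finset V)}
    (hφ : ∀ ⦃α β α'⦄, (α, β) ∈ W → α' ∈ K → CodimOneFace α' β → α' ≠ α → φ α' < φ α)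
    {r : ℕ} {a : Fin (r + 1) → Finset V} {b : Fin r → Finset V} (hab : IsVPath K W a b) :
    StrictAnti (φ ∘ a) := by
  obtain ⟨haK, -, hstep⟩ := hab
  refine Fin.strictAnti_iff_succ_lt.mpr fun i => ?_
  obtain ⟨hpair, hface, hne⟩ := hstep i
  exact hφ hpair (haK i.succ) hface hne

theorem noClosedVPath_of_forall_lt {P : Type*} [Preorder P] {φ : Finset V → P}
    {W : Set (Finset V × Finset V)}
    (hφ : ∀ ⦃α β α'⦄, (α, β) ∈ W → α' ∈ K → CodimOneFace α' β → α' ≠ α → φ α' < φ α) :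
    NoClosedVPath K W := by
  intro r hr a b hab hclosed
  have hlt : φ (a (Fin.last r)) < φ (a 0) :=
    hab.strictAnti_comp hφ (Fin.lt_def.mpr hr)
  exact hlt.ne (congrArg φ hclosed)

theorem lt_of_mem_gradVF_of_codimOneFace {f : Finset V → ℝ} {α β α' : Finset V}
    (hβ : {γ | γ ∈ K ∧ CodimOneFace γ β ∧ f β ≤ f γ}.Subsingleton)
    (hαβ : (α, β) ∈ gradVF K f) (hα'K : α' ∈ K) (hα' : CodimOneFace α' β) (hne : α' ≠ α) :
    f α' < f β := by
  obtain ⟨hαK, -, hα, hle⟩ := hαβ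
  by_contra! hge
  -- `α` is already the one face of `β` allowed a value at least `f β`.
  exact hne (hβ ⟨hα'K, hα', hge⟩ ⟨hαK, hα, hle⟩)

theorem gradVF_noClosedVPath_general {f : Finset V → ℝ}
    (hf : ∀ β ∈ K, {γ | γ ∈ K ∧ CodimOneFace γ β ∧ f β ≤ f γ}.Subsingleton) :
    NoClosedVPath K (gradVF K f) := by
  refine noClosedVPath_of_forall_lt (φ := f) fun α β α' hαβ hα'K hα' hne => ?_
  have ⟨_, hβK, _, hle⟩ := hαβ
  calc
    f α' < f β := lt_of_mem_gradVF_of_codimOneFace (hf β hβK) hαβ hα'K hα' hne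
    _ ≤ f α := hle

end

/-- the gradient vector field of a discrete Morse function admits no
nontrivial closed `V`-path. -/
theorem gradVF_noClosedVPath {V : Type*} (K : Set (Finset V))
    (hK : IsComplex K) (f : Finset V → ℝ) (hf : IsDiscreteMorse K f) :
    NoClosedVPath K (gradVF K f) :=
  gradVF_noClosedVPath_general fun β hβ => (hf β hβ).2
end

section
/- (Forman, Theorem 3.9) Let V be a discrete vector field on a finite abstract simplicial complex K. Then V is the gradient vector field of some discrete Morse function on K — i.e., there exists a discrete Morse function f on K with V = {(α, β) : α ⋖ β and f(β) ≤ f(α)} — if and only if V admits no nontrivial closed V-path. -/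
/-!
Along a gradient path of a discrete Morse function `f` the value on the `α_i` strictly decreases,
since the only face of `β_i` with value at least `f β_i` is `α_i`; hence no such path closes up.

Conversely, if no path of `W` closes up, then the steps `α_i → α_{i+1}` generate a strict partial
order on the countable set `K`, and a linear extension of it embeds in the interval `(0, 1)`. Adding
the cardinality gives a function `g` that increases with dimension and decreases along paths. Let
`f` equal `g`, except that `f β = g α` for `(α, β) ∈ W`. Paired simplices then have equal values,
and an unpaired codimension-one face `α` of `β` has `f α ≤ g α < f β`: when `β` is paired with some
`γ ≠ α`, the last inequality holds because `γ → α` is a step, and otherwise for dimension reasons.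
-/

open Relation

section Acyclic

variable {α : Type*} {r : α → α → Prop}

theorem exists_relSeries_of_transGen {x y : α} (h : TransGen r x y) :
    ∃ p : RelSeries {q : α × α | r q.1 q.2}, 0 < p.length ∧ p.head = x ∧ p.last = y := by
  induction h with
  | single hxy =>
    let p := RelSeries.singleton {q : α × α | r q.1 q.2} x
    exact ⟨p.snoc _ hxy, Nat.succ_pos _, p.head_snoc .., p.last_snoc ..⟩
  | tail _ hyz ih =>
    obtain ⟨p, -, rfl, rfl⟩ := ih
    exact ⟨p.snoc _ hyz, Nat.succ_pos _, p.head_snoc .., p.last_snoc ..⟩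

theorem exists_forall_lt_of_irrefl_transGen {β : Type*} [LinearOrder β] [DenselyOrdered β]
    [Nontrivial β] [Countable α] (hr : ∀ a, ¬ TransGen r a a) :
    ∃ g : α → β, ∀ ⦃a b⦄, r a b → g a < g b := by
  have : IsStrictOrder α (TransGen r) := { irrefl := hr }
  let : PartialOrder α := partialOrderOfSO (TransGen r)
  have : Countable (LinearExtension α) := ‹Countable α›
  obtain ⟨e⟩ := Order.embedding_from_countable_to_dense (LinearExtension α) β
  have h_strict : StrictMono (toLinearExtension (α := α)) :=
    toLinearExtension.monotone.strictMono_of_injective Function.injective_id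
  exact ⟨e ∘ toLinearExtension, fun a b hab => e.strictMono (h_strict (TransGen.single hab))⟩

end Acyclic

section VectorField

variable {V : Type*} {K : Set (Finset V)} {W : Set (Finset V × Finset V)}

namespace IsDVF

variable {a a' b b' : Finset V}

theorem left_mem (hW : IsDVF K W) (h : (a, b) ∈ W) : a ∈ K := (hW.1 _ h).1

theorem right_mem (hW : IsDVF K W) (h : (a, b) ∈ W) : b ∈ K := (hW.1 _ h).2.1

theorem codimOneFace (hW : IsDVF K W) (h : (a, b) ∈ W) : CodimOneFace a b := (hW.1 _ h).2.2

theorem left_unique (hW : IsDVF K W) (h : (a, b) ∈ W) (h' : (a', b) ∈ W) : a = a' :=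
  congrArg Prod.fst (hW.2 b (hW.right_mem h) ⟨h, .inr rfl⟩ ⟨h', .inr rfl⟩)

theorem right_unique (hW : IsDVF K W) (h : (a, b) ∈ W) (h' : (a, b') ∈ W) : b = b' :=
  congrArg Prod.snd (hW.2 a (hW.left_mem h) ⟨h, .inl rfl⟩ ⟨h', .inl rfl⟩)

theorem left_ne_right (hW : IsDVF K W) (h : (a, b) ∈ W) (h' : (a', b') ∈ W) : a ≠ b' := by
  rintro rfl
  have hba : b = a :=
    congrArg Prod.snd (hW.2 a (hW.left_mem h) ⟨h, .inl rfl⟩ ⟨h', .inr rfl⟩)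
  have hcard := (hW.codimOneFace h).2
  rw [hba] at hcard
  omega

theorem isDiscreteMorse {f : Finset V → ℝ} (h : IsDVF K (gradVF K f)) : IsDiscreteMorse K f :=
  fun _ hσ =>
    ⟨fun _ hβ _ hβ' => h.right_unique ⟨hσ, hβ⟩ ⟨hσ, hβ'⟩,
      fun _ ha _ ha' => h.left_unique ⟨ha.1, hσ, ha.2⟩ ⟨ha'.1, hσ, ha'.2⟩⟩

end IsDVF

/-- `VStep W a c` says that `a, b, c` is a `V`-path of length one for some simplex `b`. Membership
of `a` and `c` in the complex is left to the context. -/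
def VStep (W : Set (Finset V × Finset V)) (a c : Finset V) : Prop :=
  ∃ b, (a, b) ∈ W ∧ CodimOneFace c b ∧ c ≠ a

theorem IsDVF.card_eq_of_vStep (hW : IsDVF K W) {a c : Finset V} (h : VStep W a c) :
    c.card = a.card := by
  obtain ⟨b, hab, hcb, -⟩ := h
  have := (hW.codimOneFace hab).2
  have := hcb.2
  omega

theorem IsDiscreteMorse.lt_of_vStep {f : Finset V → ℝ} (hf : IsDiscreteMorse K f) {a c : Finset V}
    (hc : c ∈ K) (h : VStep (gradVF K f) a c) : f c < f a := by
  obtain ⟨b, ⟨ha, hb, hab, hba⟩, hcb, hca⟩ := h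
  by_contra! hac
  exact hca ((hf b hb).2 ⟨hc, hcb, hba.trans hac⟩ ⟨ha, hab, hba⟩)

theorem IsDiscreteMorse.noClosedVPath_gradVF {f : Finset V → ℝ} (hf : IsDiscreteMorse K f) :
    NoClosedVPath K (gradVF K f) := by
  rintro r hr a b ⟨ha, -, hpath⟩ hclosed
  have hanti : StrictAnti (f ∘ a) :=
    Fin.strictAnti_iff_succ_lt.2 fun i => hf.lt_of_vStep (ha _) ⟨b i, hpath i⟩
  exact (hanti (show 0 < Fin.last r from hr)).ne (congrArg f hclosed)

theorem NoClosedVPath.not_transGen_vStep (hW : IsDVF K W) (h : NoClosedVPath K W) (a : K) :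
    ¬ TransGen (fun x y : K => VStep W x y) a a := by
  intro hcycle
  obtain ⟨p, hpos, hhead, hlast⟩ := exists_relSeries_of_transGen hcycle
  choose b hb using p.step
  exact h p.length hpos (fun i => p i) b ⟨fun i => (p i).2, fun i => hW.right_mem (hb i).1, hb⟩
    (congrArg Subtype.val (hlast.trans hhead.symm))

/-- A rank function for `W`: it increases with dimension and decreases along paths. Its composition
with `arrowTail W` is a discrete Morse function. Values outside `K` are irrelevant. -/
structure IsVRank (K : Set (Finset V)) (W : Set (Finset V × Finset V)) (g : Finset V → ℝ) :
    Prop where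
  lt_of_card_lt : ∀ ⦃a⦄, a ∈ K → ∀ ⦃b⦄, b ∈ K → a.card < b.card → g a < g b
  lt_of_vStep : ∀ ⦃a⦄, a ∈ K → ∀ ⦃c⦄, c ∈ K → VStep W a c → g c < g a

theorem NoClosedVPath.exists_isVRank (hW : IsDVF K W) (hK : K.Countable)
    (h : NoClosedVPath K W) : ∃ g, IsVRank K W g := by
  have : Countable K := hK
  have hirrefl (a : K) : ¬ TransGen (Function.swap fun x y : K => VStep W x y) a a :=
    fun hcycle => h.not_transGen_vStep hW a (transGen_swap.1 hcycle)
  have : Nontrivial (Set.Ioo (0 : ℝ) 1) := (Set.Ioo_infinite zero_lt_one).nontrivial.coe_sort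
  obtain ⟨e, he⟩ := exists_forall_lt_of_irrefl_transGen (β := Set.Ioo (0 : ℝ) 1) hirrefl
  obtain ⟨g, hg⟩ :=
    Subtype.val_injective.surjective_comp_right fun a : K => (a.1.card + e a : ℝ)
  replace hg (a : K) : g a = a.1.card + e a := congrFun hg a
  refine ⟨g, fun a ha b hb hcard => ?_, fun a ha c hc hstep => ?_⟩
  · rw [hg ⟨a, ha⟩, hg ⟨b, hb⟩]
    have hcast : (a.card + 1 : ℝ) ≤ b.card := mod_cast hcard
    linarith [(e ⟨a, ha⟩).2.2, (e ⟨b, hb⟩).2.1]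
  · rw [hg ⟨a, ha⟩, hg ⟨c, hc⟩, hW.card_eq_of_vStep hstep]
    have hlt : (e ⟨c, hc⟩ : ℝ) < e ⟨a, ha⟩ := he (a := ⟨c, hc⟩) (b := ⟨a, ha⟩) hstep
    linarith

open Classical in
/-- The tail of the arrow of `W` ending at `σ`, or `σ` itself if no arrow of `W` ends there.
Composing a function with `arrowTail W` makes it constant on the pairs of `W`. -/
noncomputable def arrowTail (W : Set (Finset V × Finset V)) (σ : Finset V) : Finset V :=
  if h : ∃ a, (a, σ) ∈ W then h.choose else σ

theorem arrowTail_of_forall_notMem {σ : Finset V} (h : ∀ a, (a, σ) ∉ W) : arrowTail W σ = σ :=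
  dif_neg (not_exists.2 h)

theorem IsDVF.arrowTail_of_mem (hW : IsDVF K W) {a b : Finset V} (h : (a, b) ∈ W) :
    arrowTail W b = a := by
  have hex : ∃ a, (a, b) ∈ W := ⟨a, h⟩
  rw [arrowTail, dif_pos hex]
  exact hW.left_unique hex.choose_spec h

namespace IsVRank

variable {g : Finset V → ℝ} {a b : Finset V}

theorem lt_of_codimOneFace (hg : IsVRank K W g) (ha : a ∈ K) (hb : b ∈ K)
    (hab : CodimOneFace a b) : g a < g b :=
  hg.lt_of_card_lt ha hb (hab.2 ▸ Nat.lt_succ_self _)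

theorem arrowTail_le (hg : IsVRank K W g) (hW : IsDVF K W) (ha : a ∈ K) :
    g (arrowTail W a) ≤ g a := by
  by_cases hhead : ∃ c, (c, a) ∈ W
  · obtain ⟨c, hc⟩ := hhead
    rw [hW.arrowTail_of_mem hc]
    exact (hg.lt_of_codimOneFace (hW.left_mem hc) ha (hW.codimOneFace hc)).le
  · rw [arrowTail_of_forall_notMem (not_exists.1 hhead)]

theorem lt_arrowTail (hg : IsVRank K W g) (hW : IsDVF K W) (ha : a ∈ K) (hb : b ∈ K)
    (hab : CodimOneFace a b) (h : (a, b) ∉ W) : g a < g (arrowTail W b) := by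
  by_cases hhead : ∃ c, (c, b) ∈ W
  · obtain ⟨c, hc⟩ := hhead
    rw [hW.arrowTail_of_mem hc]
    have hne : a ≠ c := fun hac => h (hac ▸ hc)
    exact hg.lt_of_vStep (hW.left_mem hc) ha ⟨b, hc, hab, hne⟩
  · rw [arrowTail_of_forall_notMem (not_exists.1 hhead)]
    exact hg.lt_of_codimOneFace ha hb hab

theorem gradVF_comp_arrowTail (hg : IsVRank K W g) (hW : IsDVF K W) :
    gradVF K (g ∘ arrowTail W) = W := by
  ext ⟨a, b⟩
  constructor
  · rintro ⟨ha, hb, hab, hle⟩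
    by_contra h
    exact hle.not_gt ((hg.arrowTail_le hW ha).trans_lt (hg.lt_arrowTail hW ha hb hab h))
  · intro h
    refine ⟨hW.left_mem h, hW.right_mem h, hW.codimOneFace h, le_of_eq (congrArg g ?_)⟩
    have hnot : ∀ c, (c, a) ∉ W := fun c hc => hW.left_ne_right h hc rfl
    rw [hW.arrowTail_of_mem h, arrowTail_of_forall_notMem hnot]

end IsVRank

theorem isGradient_iff_noClosedVPath_general (hK : K.Countable) (hW : IsDVF K W) :
    (∃ f : Finset V → ℝ, IsDiscreteMorse K f ∧ W = gradVF K f) ↔ NoClosedVPath K W := by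
  constructor
  · rintro ⟨f, hf, rfl⟩
    exact hf.noClosedVPath_gradVF
  · intro h
    obtain ⟨g, hg⟩ := h.exists_isVRank hW hK
    have hgrad : W = gradVF K (g ∘ arrowTail W) := (hg.gradVF_comp_arrowTail hW).symm
    exact ⟨_, IsDVF.isDiscreteMorse (hgrad ▸ hW), hgrad⟩

end VectorField

/-- Forman, Theorem 3.9: a discrete vector field on a finite complex
is the gradient vector field of some discrete Morse function iff it admits no
nontrivial closed `V`-path. -/
theorem isGradient_iff_noClosedVPath {V : Type*} (K : Set (Finset V))
    (hK : IsComplex K) (hfin : K.Finite)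
    (W : Set (Finset V × Finset V)) (hW : IsDVF K W) :
    (∃ f : Finset V → ℝ, IsDiscreteMorse K f ∧ W = gradVF K f) ↔
      NoClosedVPath K W :=
  isGradient_iff_noClosedVPath_general hfin.countable hW
end

section
/- (Forman, Theorem 6.2) Let V be a discrete vector field on a finite abstract simplicial complex K. Then V admits a nontrivial closed V-path if and only if the modified Hasse diagram of (K, V) contains a nontrivial closed directed path, i.e., a directed cycle of positive length. -/
/-- Directed edge of the modified Hasse diagram of `(K, W)`: `β → α` whenever
`α ⋖ β` and `(α, β) ∉ W`, and `α → β` whenever `(α, β) ∈ W`. -/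
def HasseEdge {V : Type*} (K : Set (Finset V)) (W : Set (Finset V × Finset V))
    (σ τ : Finset V) : Prop :=
  σ ∈ K ∧ τ ∈ K ∧ ((CodimOneFace τ σ ∧ (τ, σ) ∉ W) ∨ (σ, τ) ∈ W)

/-!
Collapse every simplex onto the lower member of its pair, unpaired simplices being fixed. Along an
edge of the modified Hasse diagram the dimension of the collapsed simplex never increases, so it is
constant on a directed cycle. This forces every edge of the cycle either to be a pair of the vector
field, which collapses to a point, or to descend from the upper member of a pair to a simplex that
is not an upper member, which collapses to one step of a `V`-path. A cycle cannot climb forever, so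
it has an edge of the second kind, and its image is a nontrivial closed `V`-path.
-/

open Relation

section Relation

variable {α β : Type*} {r : α → α → Prop}

theorem transGen_iff_exists_fin {x y : α} :
    TransGen r x y ↔ ∃ n : ℕ, 0 < n ∧ ∃ c : Fin (n + 1) → α,
      (∀ i : Fin n, r (c i.castSucc) (c i.succ)) ∧ c 0 = x ∧ c (Fin.last n) = y := by
  constructor
  · intro h
    induction h with
    | @single y hxy => exact ⟨1, one_pos, ![x, y], by simp [hxy], rfl, rfl⟩
    | @tail y z _ hyz ih =>
      obtain ⟨n, -, c, hc, rfl, rfl⟩ := ih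
      refine ⟨n + 1, n.succ_pos, Fin.snoc (α := fun _ => α) c z, fun i => ?_,
        Fin.snoc_castSucc (α := fun _ => α) z c 0, Fin.snoc_last (α := fun _ => α) z c⟩
      cases i using Fin.lastCases with
      | last => simpa using hyz
      | cast i => simpa only [← Fin.castSucc_succ, Fin.snoc_castSucc] using hc i
  · rintro ⟨n, hn, c, hc, rfl, rfl⟩
    exact (Fin.liftFun_iff_succ (TransGen r)).2 (fun i => .single (hc i)) hn

theorem exists_transGen_self_iff_exists_fin :
    (∃ x, TransGen r x x) ↔ ∃ n : ℕ, 0 < n ∧ ∃ c : Fin (n + 1) → α,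
      (∀ i : Fin n, r (c i.castSucc) (c i.succ)) ∧ c (Fin.last n) = c 0 := by
  simp only [transGen_iff_exists_fin]
  constructor
  · rintro ⟨x, n, hn, c, hc, h0, hlast⟩
    exact ⟨n, hn, c, hc, hlast.trans h0.symm⟩
  · rintro ⟨n, hn, c, hc, hclosed⟩
    exact ⟨c 0, n, hn, c, hc, rfl, hclosed⟩

variable [Preorder β] {f : α → β}

theorem le_of_reflTransGen (hf : ∀ a b, r a b → f b ≤ f a) {x y : α} (h : ReflTransGen r x y) :
    f y ≤ f x := by
  induction h with
  | refl => exact le_rfl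
  | tail _ hbc ih => exact (hf _ _ hbc).trans ih

theorem reflTransGen_and_le_of_le (hf : ∀ a b, r a b → f b ≤ f a) {x y : α}
    (h : ReflTransGen r x y) (hxy : f x ≤ f y) :
    ReflTransGen (fun a b => r a b ∧ f a ≤ f b) x y := by
  induction h with
  | refl => exact .refl
  | @tail b c hxb hbc ih =>
    exact (ih (hxy.trans (hf b c hbc))).tail ⟨hbc, (le_of_reflTransGen hf hxb).trans hxy⟩

end Relation

section VectorField

variable {V : Type*} {K : Set (Finset V)} {W : Set (Finset V × Finset V)} {α β γ σ τ : Finset V}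

/-- The step relation `α_i ↦ α_{i+1}` of a `V`-path: `γ` is a codimension-one face, other than `α`,
of a simplex paired with `α`. The membership of `α` in `K` is left to the vector field. -/
def VPathStep (K : Set (Finset V)) (W : Set (Finset V × Finset V)) (α γ : Finset V) : Prop :=
  γ ∈ K ∧ ∃ β, (α, β) ∈ W ∧ CodimOneFace γ β ∧ γ ≠ α

open Classical in
/-- The collapse of the pairs of `W`: an upper member is sent to the lower member of its pair, and
every other simplex to itself. When `W` is not a vector field, the lower member is an arbitrary
choice. -/
noncomputable def pairCollapse (W : Set (Finset V × Finset V)) (σ : Finset V) : Finset V :=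
  if h : ∃ α, (α, σ) ∈ W then h.choose else σ

theorem pairCollapse_mem_or_eq_self (W : Set (Finset V × Finset V)) (σ : Finset V) :
    (pairCollapse W σ, σ) ∈ W ∨ pairCollapse W σ = σ := by
  unfold pairCollapse
  split_ifs with h
  · exact .inl h.choose_spec
  · exact .inr rfl

theorem pairCollapse_mem_of_mem (h : (α, β) ∈ W) : (pairCollapse W β, β) ∈ W := by
  have hβ : ∃ α, (α, β) ∈ W := ⟨α, h⟩
  simpa only [pairCollapse, dif_pos hβ] using hβ.choose_spec

namespace IsDVF

theorem card_snd_eq (hW : IsDVF K W) (h : (α, β) ∈ W) : β.card = α.card + 1 :=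
  (hW.1 _ h).2.2.2

theorem fst_unique (hW : IsDVF K W) (hα : (α, γ) ∈ W) (hβ : (β, γ) ∈ W) : α = β :=
  congrArg Prod.fst (hW.2 γ (hW.1 _ hα).2.1 ⟨hα, .inr rfl⟩ ⟨hβ, .inr rfl⟩)

theorem notMem_of_mem (hW : IsDVF K W) (h : (α, β) ∈ W) : (β, γ) ∉ W := by
  intro h'
  have hpair : (α, β) = (β, γ) := hW.2 β (hW.1 _ h).2.1 ⟨h, .inr rfl⟩ ⟨h', .inl rfl⟩
  have hαβ : α = β := congrArg Prod.fst hpair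
  have hcard := hW.card_snd_eq h
  rw [hαβ] at hcard
  omega

theorem pairCollapse_eq_of_mem (hW : IsDVF K W) (h : (α, β) ∈ W) :
    pairCollapse W α = pairCollapse W β :=
  calc
    pairCollapse W α = α :=
      (pairCollapse_mem_or_eq_self W α).resolve_left fun hα => hW.notMem_of_mem hα h
    α = pairCollapse W β := hW.fst_unique h (pairCollapse_mem_of_mem h)

theorem card_pairCollapse_le (hW : IsDVF K W) (σ : Finset V) :
    (pairCollapse W σ).card ≤ σ.card := by
  rcases pairCollapse_mem_or_eq_self W σ with h | h
  · exact Finset.card_le_card (hW.1 _ h).2.2.1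
  · rw [h]

theorem card_le_card_pairCollapse_add_one (hW : IsDVF K W) (σ : Finset V) :
    σ.card ≤ (pairCollapse W σ).card + 1 := by
  rcases pairCollapse_mem_or_eq_self W σ with h | h
  · exact (hW.card_snd_eq h).le
  · rw [h]; exact Nat.le_succ _

theorem card_pairCollapse_le_of_hasseEdge (hW : IsDVF K W) (h : HasseEdge K W σ τ) :
    (pairCollapse W τ).card ≤ (pairCollapse W σ).card := by
  rcases h with ⟨-, -, ⟨hface, -⟩ | hup⟩
  · have hτ := hW.card_pairCollapse_le τ
    have hσ := hW.card_le_card_pairCollapse_add_one σ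
    have hcard := hface.2
    omega
  · rw [hW.pairCollapse_eq_of_mem hup]

theorem vPathStep_pairCollapse (hW : IsDVF K W) (h : HasseEdge K W σ τ) (hdown : (σ, τ) ∉ W)
    (hle : (pairCollapse W σ).card ≤ (pairCollapse W τ).card) :
    VPathStep K W (pairCollapse W σ) (pairCollapse W τ) := by
  obtain ⟨hface, hτσ⟩ := h.2.2.resolve_right hdown
  have hcard := hface.2
  have hσ_upper : (pairCollapse W σ, σ) ∈ W := by
    refine (pairCollapse_mem_or_eq_self W σ).resolve_right fun hσ => ?_
    have hτ_card := hW.card_pairCollapse_le τ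
    rw [hσ] at hle
    omega
  have hτ_fixed : pairCollapse W τ = τ := by
    refine (pairCollapse_mem_or_eq_self W τ).resolve_left fun hτ => ?_
    have hτ_card := hW.card_snd_eq hτ
    have hσ_card := hW.card_snd_eq hσ_upper
    omega
  rw [hτ_fixed]
  exact ⟨h.2.1, σ, hσ_upper, hface, fun heq => hτσ (heq ▸ hσ_upper)⟩

theorem exists_down_hasseEdge (hW : IsDVF K W) (h : TransGen (HasseEdge K W) σ σ) :
    ∃ α β, HasseEdge K W α β ∧ (α, β) ∉ W ∧ ReflTransGen (HasseEdge K W) β α := by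
  obtain ⟨τ, hστ, hτσ⟩ := TransGen.head'_iff.1 h
  by_cases hup : (σ, τ) ∈ W
  · rcases hτσ.cases_head with rfl | ⟨γ, hτγ, hγσ⟩
    · exact absurd hup (hW.notMem_of_mem hup)
    · exact ⟨τ, γ, hτγ, hW.notMem_of_mem hup, hγσ.tail hστ⟩
  · exact ⟨σ, τ, hστ, hup, hτσ⟩

theorem exists_transGen_vPathStep (hW : IsDVF K W) (h : TransGen (HasseEdge K W) σ σ) :
    ∃ α, TransGen (VPathStep K W) α α := by
  obtain ⟨α, β, hαβ, hdown, hβα⟩ := hW.exists_down_hasseEdge h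
  have hmono : ∀ σ τ, HasseEdge K W σ τ → (pairCollapse W τ).card ≤ (pairCollapse W σ).card :=
    fun _ _ => hW.card_pairCollapse_le_of_hasseEdge
  have hlevel := reflTransGen_and_le_of_le hmono hβα (hmono α β hαβ)
  have hreturn : ReflTransGen (VPathStep K W) (pairCollapse W β) (pairCollapse W α) := by
    refine ReflTransGen.lift' (pairCollapse W) (fun σ τ hστ => ?_) _ _ hlevel
    by_cases hup : (σ, τ) ∈ W
    · rw [Function.onFun, hW.pairCollapse_eq_of_mem hup]
    · exact .single (hW.vPathStep_pairCollapse hστ.1 hup hστ.2)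
  exact ⟨pairCollapse W α,
    .head' (hW.vPathStep_pairCollapse hαβ hdown (le_of_reflTransGen hmono hβα)) hreturn⟩

theorem transGen_hasseEdge_of_vPathStep (hW : IsDVF K W) (h : VPathStep K W α γ) :
    TransGen (HasseEdge K W) α γ := by
  obtain ⟨hγ, β, hαβ, hface, hne⟩ := h
  obtain ⟨hα, hβ, -⟩ := hW.1 _ hαβ
  have hup : HasseEdge K W α β := ⟨hα, hβ, .inr hαβ⟩
  have hdown : HasseEdge K W β γ :=
    ⟨hβ, hγ, .inl ⟨hface, fun hγβ => hne (hW.fst_unique hγβ hαβ)⟩⟩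
  exact .head hup (.single hdown)

theorem exists_isVPath_iff (hW : IsDVF K W) {r : ℕ} (hr : 0 < r) {a : Fin (r + 1) → Finset V} :
    (∃ b, IsVPath K W a b) ↔ ∀ i : Fin r, VPathStep K W (a i.castSucc) (a i.succ) := by
  constructor
  · rintro ⟨b, ha, -, hab⟩ i
    exact ⟨ha _, b i, hab i⟩
  · intro h
    choose hmem b hab using h
    refine ⟨b, Fin.cases ?_ hmem, fun i => (hW.1 _ (hab i).1).2.1, hab⟩
    exact (hW.1 _ (hab ⟨0, hr⟩).1).1

theorem exists_closed_isVPath_iff (hW : IsDVF K W) :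
    (∃ r : ℕ, 0 < r ∧ ∃ a : Fin (r + 1) → Finset V, ∃ b : Fin r → Finset V,
        IsVPath K W a b ∧ a (Fin.last r) = a 0) ↔
      ∃ α, TransGen (VPathStep K W) α α := by
  rw [exists_transGen_self_iff_exists_fin]
  refine exists_congr fun r => and_congr_right fun hr => exists_congr fun a => ?_
  rw [exists_and_right, hW.exists_isVPath_iff hr]

end IsDVF

end VectorField

theorem closedVPath_iff_hasseCycle_general {V : Type*} (K : Set (Finset V))
    (W : Set (Finset V × Finset V)) (hW : IsDVF K W) :
    (∃ r : ℕ, 0 < r ∧ ∃ a : Fin (r + 1) → Finset V, ∃ b : Fin r → Finset V,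
        IsVPath K W a b ∧ a (Fin.last r) = a 0) ↔
    (∃ n : ℕ, 0 < n ∧ ∃ c : Fin (n + 1) → Finset V,
        (∀ i : Fin n, HasseEdge K W (c i.castSucc) (c i.succ)) ∧
        c (Fin.last n) = c 0) := by
  rw [hW.exists_closed_isVPath_iff, ← exists_transGen_self_iff_exists_fin]
  constructor
  · rintro ⟨α, hα⟩
    exact ⟨α, TransGen.closed (fun _ _ => hW.transGen_hasseEdge_of_vPathStep) _ _ hα⟩
  · rintro ⟨σ, hσ⟩
    exact hW.exists_transGen_vPathStep hσ

/-- Forman, Theorem 6.2: `W` admits a nontrivial closed `V`-path iff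
the modified Hasse diagram of `(K, W)` contains a directed cycle of positive length. -/
theorem closedVPath_iff_hasseCycle {V : Type*} (K : Set (Finset V))
    (hK : IsComplex K) (hfin : K.Finite)
    (W : Set (Finset V × Finset V)) (hW : IsDVF K W) :
    (∃ r : ℕ, 0 < r ∧ ∃ a : Fin (r + 1) → Finset V, ∃ b : Fin r → Finset V,
        IsVPath K W a b ∧ a (Fin.last r) = a 0) ↔
    (∃ n : ℕ, 0 < n ∧ ∃ c : Fin (n + 1) → Finset V,
        (∀ i : Fin n, HasseEdge K W (c i.castSucc) (c i.succ)) ∧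
        c (Fin.last n) = c 0) :=
  closedVPath_iff_hasseCycle_general K W hW
end

section
/- Let V be a discrete vector field on an abstract simplicial complex K admitting no nontrivial closed V-path. Then in any V-path α_0, β_0, α_1, β_1, …, β_{r−1}, α_r, the simplices α_0, α_1, …, α_r are pairwise distinct. Consequently, on a finite complex every V-path has length bounded by the number of simplices of K. -/
namespace IsVPath

variable {V : Type*} {K : Set (Finset V)} {W : Set (Finset V × Finset V)} {r : ℕ}
  {a : Fin (r + 1) → Finset V} {b : Fin r → Finset V}

theorem segment (h : IsVPath K W a b) {m n : ℕ} (hmn : m + n ≤ r) :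
    IsVPath K W (fun k : Fin (n + 1) ↦ a ⟨m + k, by omega⟩)
      (fun k : Fin n ↦ b ⟨m + k, by omega⟩) := by
  obtain ⟨ha, hb, hstep⟩ := h
  exact ⟨fun _ ↦ ha _, fun _ ↦ hb _, fun k ↦ hstep ⟨m + k, by omega⟩⟩

theorem injective (h : IsVPath K W a b) (hnc : NoClosedVPath K W) : Function.Injective a := by
  refine Function.Injective.of_lt_imp_ne fun i j hij heq ↦ ?_
  obtain ⟨n, hn⟩ := Nat.exists_eq_add_of_lt hij
  have hsegment_open : a ⟨i + (n + 1), by omega⟩ ≠ a i :=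
    hnc (n + 1) n.succ_pos _ _ (h.segment (m := i) (by omega))
  have hj : j = ⟨i + (n + 1), by omega⟩ := Fin.ext hn
  exact hsegment_open (hj ▸ heq.symm)

theorem length_succ_le_card (h : IsVPath K W a b) (ha : Function.Injective a) (hK : K.Finite) :
    r + 1 ≤ hK.toFinset.card := by
  have hmaps : ∀ i ∈ Finset.univ, a i ∈ hK.toFinset := fun i _ ↦ hK.mem_toFinset.mpr (h.1 i)
  simpa only [Finset.card_fin] using Finset.card_le_card_of_injOn a hmaps ha.injOn

end IsVPath

theorem vPath_alphas_injective_general {V : Type*} {K : Set (Finset V)}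
    {W : Set (Finset V × Finset V)} (hnc : NoClosedVPath K W) {r : ℕ}
    {a : Fin (r + 1) → Finset V} {b : Fin r → Finset V} (h : IsVPath K W a b) :
    Function.Injective a ∧ ∀ hfin : K.Finite, r + 1 ≤ hfin.toFinset.card :=
  ⟨h.injective hnc, h.length_succ_le_card (h.injective hnc)⟩

/-- if `W` admits no nontrivial closed `V`-path, then in any `V`-path
the simplices `α_0, …, α_r` are pairwise distinct; consequently on a finite complex
every `V`-path has length bounded by the number of simplices of `K`. -/
theorem vPath_alphas_injective {V : Type*} (K : Set (Finset V))
    (hK : IsComplex K) (W : Set (Finset V × Finset V)) (hW : IsDVF K W)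
    (hnc : NoClosedVPath K W) :
    ∀ r : ℕ, ∀ a : Fin (r + 1) → Finset V, ∀ b : Fin r → Finset V,
      IsVPath K W a b →
        Function.Injective a ∧ ∀ hfin : K.Finite, r + 1 ≤ hfin.toFinset.card := by
  intro r a b h
  exact vPath_alphas_injective_general hnc h
end

section
/- Let V be a gradient vector field (a discrete vector field admitting no nontrivial closed V-path) on a finite abstract simplicial complex K. Then for every vertex x of K there exist a unique r ≥ 0 and unique sequences of vertices x = x_0, x_1, …, x_r and of 1-simplices e_0, …, e_{r−1} such that for each i: ({x_i}, e_i) ∈ V, e_i = {x_i, x_{i+1}} with x_{i+1} ≠ x_i, and the final vertex x_r belongs to no pair of V (i.e., x_r is a critical vertex). In particular, every vertex of K determines a unique critical vertex, the terminus of its descending V-path, so the vertices of K are partitioned into the basins (stable sets) of the critical vertices. -/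
/-!
A vertex `x` is paired upwards with at most one edge `{x, y}`, and it is paired at all exactly when
such an edge exists. So the descending edges form a partial function `x ↦ y` on vertices whose
undefined points are the critical vertices, and following it can only fail to stop along an infinite
sequence of descending edges. In a finite complex such a sequence revisits a vertex, which gives a
nontrivial closed `V`-path.
-/

section RelSeries

variable {α : Type*} {r : SetRel α α}

theorem exists_relSeries_last_notMem_dom {x : α} (hx : Acc (fun y z ↦ (z, y) ∈ r) x) :
    ∃ p : RelSeries r, p.head = x ∧ p.last ∉ r.dom := by
  induction hx with
  | intro x _ ih =>
    by_cases hdom : x ∈ r.dom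
    · obtain ⟨y, hxy⟩ := hdom
      obtain ⟨p, rfl, hlast⟩ := ih y hxy
      exact ⟨p.cons x hxy, p.head_cons x hxy, by rwa [p.last_cons x hxy]⟩
    · exact ⟨.singleton r x, rfl, hdom⟩

variable {p q : RelSeries r}

theorem relSeries_apply_eq_of_head_eq (hr : Relator.RightUnique fun x y ↦ (x, y) ∈ r)
    (hhead : p.head = q.head) (k : ℕ) (hp : k < p.length + 1) (hq : k < q.length + 1) :
    p ⟨k, hp⟩ = q ⟨k, hq⟩ := by
  induction k with
  | zero => exact hhead
  | succ k ih =>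
    have hstep : (p ⟨k, by lia⟩, p ⟨k + 1, hp⟩) ∈ r := p.step ⟨k, by lia⟩
    rw [ih (by lia) (by lia)] at hstep
    exact hr hstep (q.step ⟨k, by lia⟩)

theorem relSeries_length_le_of_last_notMem_dom (hr : Relator.RightUnique fun x y ↦ (x, y) ∈ r)
    (hhead : p.head = q.head) (hlast : q.last ∉ r.dom) : p.length ≤ q.length := by
  by_contra! hlt
  have hstep : p ⟨q.length, by lia⟩ ∈ r.dom := ⟨_, p.step ⟨q.length, hlt⟩⟩
  rw [relSeries_apply_eq_of_head_eq hr hhead _ _ q.length.lt_succ_self] at hstep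
  exact hlast hstep

theorem relSeries_eq_of_head_eq_of_last_notMem_dom
    (hr : Relator.RightUnique fun x y ↦ (x, y) ∈ r) (hhead : p.head = q.head)
    (hp : p.last ∉ r.dom) (hq : q.last ∉ r.dom) : p = q := by
  have hlength : p.length = q.length :=
    le_antisymm (relSeries_length_le_of_last_notMem_dom hr hhead hq)
      (relSeries_length_le_of_last_notMem_dom hr hhead.symm hp)
  exact RelSeries.ext hlength (funext fun i ↦ relSeries_apply_eq_of_head_eq hr hhead i _ _)

theorem existsUnique_relSeries_last_notMem_dom (hr : Relator.RightUnique fun x y ↦ (x, y) ∈ r)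
    {x : α} (hx : Acc (fun y z ↦ (z, y) ∈ r) x) :
    ∃! p : RelSeries r, p.head = x ∧ p.last ∉ r.dom := by
  obtain ⟨p, hhead, hlast⟩ := exists_relSeries_last_notMem_dom hx
  exact ⟨p, ⟨hhead, hlast⟩, fun q hq ↦
    relSeries_eq_of_head_eq_of_last_notMem_dom hr (hq.1.trans hhead.symm) hq.2 hlast⟩

end RelSeries

section VertexDescent

variable {V : Type*} {K : Set (Finset V)} {W : Set (Finset V × Finset V)} {x : V}

theorem IsDVF.eq_of_fst_eq (hW : IsDVF K W) {p q : Finset V × Finset V} (hp : p ∈ W) (hq : q ∈ W)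
    (h : p.1 = q.1) : p = q :=
  hW.2 q.1 (hW.1 q hq).1 ⟨hp, .inl h⟩ ⟨hq, .inl rfl⟩

theorem IsDVF.snd_ne_singleton (hK : ∀ σ ∈ K, σ.Nonempty) (hW : IsDVF K W)
    {p : Finset V × Finset V} (hp : p ∈ W) : p.2 ≠ {x} := by
  intro h
  obtain ⟨hmem, -, -, hcard⟩ := hW.1 p hp
  have hpos : 0 < p.1.card := (hK p.1 hmem).card_pos
  rw [h, Finset.card_singleton] at hcard
  lia

variable [DecidableEq V]

/-- The descent relation on vertices of a discrete vector field `W`: `x` is related to `y ≠ x` when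
the vertex `x` is paired with the edge `{x, y}`. Descending paths of vertices are the `RelSeries` of
this relation. -/
def vertexDescent (W : Set (Finset V × Finset V)) : SetRel V V :=
  {p | ({p.1}, {p.1, p.2}) ∈ W ∧ p.2 ≠ p.1}

theorem rightUnique_vertexDescent (hW : IsDVF K W) :
    Relator.RightUnique fun y z ↦ (y, z) ∈ vertexDescent W := by
  rintro x y z ⟨hxy, hyx⟩ ⟨hxz, -⟩
  have hedge : ({x, y} : Finset V) = {x, z} := congrArg Prod.snd (hW.eq_of_fst_eq hxy hxz rfl)
  have hy : y ∈ ({x, z} : Finset V) := hedge ▸ by simp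
  simpa [hyx] using hy

theorem mem_dom_vertexDescent_iff (hW : IsDVF K W) :
    x ∈ (vertexDescent W).dom ↔ ∃ q ∈ W, q.1 = {x} := by
  refine ⟨fun ⟨y, hxy, _⟩ ↦ ⟨_, hxy, rfl⟩, ?_⟩
  rintro ⟨⟨_, e⟩, hq, rfl⟩
  obtain ⟨-, -, hsub, hcard⟩ := hW.1 _ hq
  obtain ⟨y, hyx, rfl⟩ := (Finset.exists_eq_insert_iff (s := {x})).mpr ⟨hsub, hcard.symm⟩
  exact ⟨y, by rwa [Finset.pair_comm], by simpa using hyx⟩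

theorem notMem_dom_vertexDescent_iff (hK : ∀ σ ∈ K, σ.Nonempty) (hW : IsDVF K W) :
    x ∉ (vertexDescent W).dom ↔ ∀ q ∈ W, q.1 ≠ {x} ∧ q.2 ≠ {x} := by
  rw [mem_dom_vertexDescent_iff hW]
  push Not
  exact forall₂_congr fun q hq ↦ (and_iff_left (hW.snd_ne_singleton hK hq)).symm

theorem isVPath_of_forall_mem_vertexDescent (hW : IsDVF K W) {f : ℕ → V}
    (hf : ∀ n, (f n, f (n + 1)) ∈ vertexDescent W) (r : ℕ) :
    IsVPath K W (r := r) (fun i ↦ {f i}) (fun i ↦ {f i, f (i + 1)}) := by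
  refine ⟨fun i ↦ (hW.1 _ (hf i).1).1, fun i ↦ (hW.1 _ (hf i).1).2.1, fun i ↦ ?_⟩
  obtain ⟨hmem, hne⟩ := hf i
  refine ⟨hmem, ⟨by simp, ?_⟩, by simpa using hne⟩
  rw [Finset.card_pair hne.symm, Finset.card_singleton]

theorem wellFounded_vertexDescent (hfin : {v : V | {v} ∈ K}.Finite) (hW : IsDVF K W)
    (hnc : NoClosedVPath K W) : WellFounded fun y z ↦ (z, y) ∈ vertexDescent W := by
  rw [wellFounded_iff_isEmpty_descending_chain]
  refine ⟨fun ⟨f, hf⟩ ↦ ?_⟩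
  obtain ⟨m, n, hmn, hfmn⟩ :=
    Set.Finite.exists_lt_map_eq_of_forall_mem (f := f) (fun n ↦ (hW.1 _ (hf n).1).1) hfin
  refine hnc (n - m) (by lia) _ _
    (isVPath_of_forall_mem_vertexDescent hW (f := fun i ↦ f (m + i)) (fun i ↦ hf (m + i)) _) ?_
  simp [hmn.le, hfmn]

/-- A descending path with `r` steps as the triple of `r`, its vertices `x_0, …, x_r` and the edges
`e_i = {x_i, x_{i+1}}` it traverses. -/
def vertexEdgePath (p : RelSeries (vertexDescent W)) :
    Σ r : ℕ, (Fin (r + 1) → V) × (Fin r → Finset V) :=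
  ⟨p.length, p, fun i ↦ {p i.castSucc, p i.succ}⟩

theorem exists_vertexEdgePath_eq_iff {p : Σ r : ℕ, (Fin (r + 1) → V) × (Fin r → Finset V)} :
    (∃ s : RelSeries (vertexDescent W), vertexEdgePath s = p) ↔
      ∀ i : Fin p.1, ({p.2.1 i.castSucc}, p.2.2 i) ∈ W ∧
        p.2.2 i = {p.2.1 i.castSucc, p.2.1 i.succ} ∧ p.2.1 i.succ ≠ p.2.1 i.castSucc := by
  constructor
  · rintro ⟨s, rfl⟩ i
    exact ⟨(s.step i).1, rfl, (s.step i).2⟩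
  · obtain ⟨r, a, b⟩ := p
    intro h
    obtain rfl : b = fun i ↦ {a i.castSucc, a i.succ} := funext fun i ↦ (h i).2.1
    exact ⟨⟨r, a, fun i ↦ ⟨(h i).1, (h i).2.2⟩⟩, rfl⟩

theorem unique_descending_path_to_critical_vertex_general (hK : ∀ σ ∈ K, σ.Nonempty)
    (hW : IsDVF K W) (hx : Acc (fun y z ↦ (z, y) ∈ vertexDescent W) x) :
    ∃! p : Σ r : ℕ, (Fin (r + 1) → V) × (Fin r → Finset V),
      p.2.1 0 = x ∧
      (∀ i : Fin p.1,
        (({p.2.1 i.castSucc} : Finset V), p.2.2 i) ∈ W ∧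
        p.2.2 i = {p.2.1 i.castSucc, p.2.1 i.succ} ∧
        p.2.1 i.succ ≠ p.2.1 i.castSucc) ∧
      (∀ q ∈ W, q.1 ≠ ({p.2.1 (Fin.last p.1)} : Finset V) ∧
        q.2 ≠ ({p.2.1 (Fin.last p.1)} : Finset V)) := by
  simp only [← exists_vertexEdgePath_eq_iff, ← notMem_dom_vertexDescent_iff hK hW]
  obtain ⟨s, hs, hunique⟩ :=
    existsUnique_relSeries_last_notMem_dom (rightUnique_vertexDescent hW) hx
  refine ⟨vertexEdgePath s, ⟨hs.1, ⟨s, rfl⟩, hs.2⟩, ?_⟩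
  rintro _ ⟨hhead, ⟨t, rfl⟩, hlast⟩
  exact congrArg vertexEdgePath (hunique t ⟨hhead, hlast⟩)

end VertexDescent

/-- for a gradient vector field on a finite complex, every vertex `x`
admits a unique descending `V`-path through vertices and `1`-simplices terminating
at a critical vertex. -/
theorem unique_descending_path_to_critical_vertex {V : Type*} [DecidableEq V] (K : Set (Finset V))
    (hK : IsComplex K) (hfin : K.Finite)
    (W : Set (Finset V × Finset V)) (hW : IsDVF K W) (hnc : NoClosedVPath K W) :
    ∀ x : V, ({x} : Finset V) ∈ K →
      ∃! p : Σ r : ℕ, (Fin (r + 1) → V) × (Fin r → Finset V),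
        p.2.1 0 = x ∧
        (∀ i : Fin p.1,
          (({p.2.1 i.castSucc} : Finset V), p.2.2 i) ∈ W ∧
          p.2.2 i = {p.2.1 i.castSucc, p.2.1 i.succ} ∧
          p.2.1 i.succ ≠ p.2.1 i.castSucc) ∧
        (∀ q ∈ W, q.1 ≠ ({p.2.1 (Fin.last p.1)} : Finset V) ∧
          q.2 ≠ ({p.2.1 (Fin.last p.1)} : Finset V)) := by
  intro x _
  exact unique_descending_path_to_critical_vertex_general hK.1 hW <|
    (wellFounded_vertexDescent (hfin.preimage Finset.singleton_injective.injOn) hW hnc).apply x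
end

section
/- (King–Knudson–Mramor, via ExtractRaw) Let K be a finite abstract simplicial complex and let h be an injective real-valued function on the vertices of K. Then there exists a gradient vector field V on K (a discrete vector field admitting no nontrivial closed V-path) such that a vertex v belongs to no pair of V if and only if v is a local minimum of h, i.e., h(v) < h(w) for every vertex w with {v, w} ∈ K. In particular, the vertex at which h attains its minimum is critical for V. -/
/-!
Pair each vertex that is not a local minimum with an edge to a strictly lower neighbour, and leave
all other simplices unpaired. An edge is used at most once, since only its higher endpoint can be
paired with it, and a path of this field moves along each edge to its lower endpoint, so `h`
strictly decreases along it and the path cannot close up.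
-/

theorem codimOneFace_pair_iff {V : Type*} [DecidableEq V] {v w : V} (hvw : v ≠ w)
    {α : Finset V} : CodimOneFace α {v, w} ↔ α = {v} ∨ α = {w} := by
  rw [CodimOneFace, Finset.card_pair hvw]
  constructor
  · rintro ⟨hsub, hcard⟩
    obtain ⟨x, rfl⟩ := Finset.card_eq_one.1 (show α.card = 1 by lia)
    simpa using hsub
  · rintro (rfl | rfl) <;> simp

theorem eq_of_pair_eq_pair_of_lt {V R : Type*} [DecidableEq V] [Preorder R] {h : V → R}
    {v v' w w' : V} (hvw : h w < h v) (hvw' : h w' < h v')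
    (heq : ({v, w} : Finset V) = {v', w'}) : v = v' := by
  rw [← Finset.coe_inj, Finset.coe_pair, Finset.coe_pair, Set.pair_eq_pair_iff] at heq
  rcases heq with ⟨hv, _⟩ | ⟨rfl, rfl⟩
  · exact hv
  · exact (lt_asymm hvw hvw').elim

theorem IsComplex.singleton_mem_of_pair_mem {V : Type*} [DecidableEq V] {K : Set (Finset V)}
    (hK : IsComplex K) {v w : V} (hvw : {v, w} ∈ K) : {v} ∈ K ∧ {w} ∈ K :=
  ⟨hK.2 _ hvw _ (by simp) (by simp), hK.2 _ hvw _ (by simp) (by simp)⟩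

theorem noClosedVPath_of_potential {V R : Type*} [Preorder R] (K : Set (Finset V))
    {W : Set (Finset V × Finset V)} (Φ : Finset V → R)
    (hΦ : ∀ α β γ, (α, β) ∈ W → CodimOneFace γ β → γ ≠ α → Φ γ < Φ α) :
    NoClosedVPath K W := by
  intro r hr a b ⟨_, _, hstep⟩ hclosed
  have hanti : StrictAnti (Φ ∘ a) := Fin.strictAnti_iff_succ_lt.2 fun i ↦
    hΦ _ _ _ (hstep i).1 (hstep i).2.1 (hstep i).2.2
  exact (hanti (Fin.lt_def.2 hr : 0 < Fin.last r)).ne (congrArg Φ hclosed)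

/-- The vertex part of a discrete vector field: each vertex `v ∈ S` flows along the edge from `v`
to `g v`. The values of `g` outside `S` are irrelevant. -/
def vertexEdgeField {V : Type*} [DecidableEq V] (S : Set V) (g : V → V) :
    Set (Finset V × Finset V) :=
  (fun v ↦ ({v}, {v, g v})) '' S

namespace vertexEdgeField

variable {V : Type*} [DecidableEq V] {S : Set V} {g : V → V}

theorem forall_ne_singleton_iff {v : V} :
    (∀ p ∈ vertexEdgeField S g, p.1 ≠ {v} ∧ p.2 ≠ {v}) ↔ v ∉ S := by
  constructor
  · exact fun hcrit hv ↦ (hcrit _ ⟨v, hv, rfl⟩).1 rfl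
  · rintro hv _ ⟨u, hu, rfl⟩
    have hu_ne : u ≠ v := fun huv ↦ hv (huv ▸ hu)
    exact ⟨by simpa using hu_ne, fun h ↦ hu_ne (Finset.mem_singleton.1 (h ▸ by simp))⟩

variable {R : Type*} {h : V → R}

theorem isDVF [Preorder R] {K : Set (Finset V)} (hK : IsComplex K)
    (hedge : ∀ v ∈ S, {v, g v} ∈ K) (hlt : ∀ v ∈ S, h (g v) < h v) :
    IsDVF K (vertexEdgeField S g) := by
  have hne : ∀ v ∈ S, v ≠ g v := fun v hv ↦ ne_of_apply_ne h (hlt v hv).ne'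
  refine ⟨?_, ?_⟩
  · rintro _ ⟨v, hv, rfl⟩
    exact ⟨(hK.singleton_mem_of_pair_mem (hedge v hv)).1, hedge v hv,
      (codimOneFace_pair_iff (hne v hv)).2 (.inl rfl)⟩
  · rintro σ - _ ⟨⟨v, hv, rfl⟩, hvσ⟩ _ ⟨⟨u, hu, rfl⟩, huσ⟩
    have hvertex_ne_edge : ∀ x, ∀ y ∈ S, ({x} : Finset V) ≠ {y, g y} := fun x y hy hxy ↦ by
      simpa [Finset.card_pair (hne y hy)] using congrArg Finset.card hxy
    suffices hvu : v = u by rw [hvu]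
    rcases hvσ with hvσ | hvσ <;> rcases huσ with huσ | huσ
    · exact Finset.singleton_injective (hvσ.trans huσ.symm)
    · exact (hvertex_ne_edge v u hu (hvσ.trans huσ.symm)).elim
    · exact (hvertex_ne_edge u v hv (huσ.trans hvσ.symm)).elim
    · exact eq_of_pair_eq_pair_of_lt (hlt v hv) (hlt u hu) (hvσ.trans huσ.symm)

theorem noClosedVPath [LinearOrder R] (K : Set (Finset V)) (hlt : ∀ v ∈ S, h (g v) < h v) :
    NoClosedVPath K (vertexEdgeField S g) := by
  -- Paths of this field run through vertices only, where this potential is `h`.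
  refine noClosedVPath_of_potential K (fun α ↦ α.sup fun v ↦ (h v : WithBot R)) ?_
  rintro _ _ γ ⟨v, hv, ⟨⟩⟩ hface hγ
  obtain rfl : γ = {g v} :=
    ((codimOneFace_pair_iff (ne_of_apply_ne h (hlt v hv).ne')).1 hface).resolve_left hγ
  simpa using hlt v hv

end vertexEdgeField

theorem extractRaw_gradient_field_exists_general {V R : Type*} [DecidableEq V] [LinearOrder R]
    (K : Set (Finset V)) (hK : IsComplex K) (h : V → R)
    (hinj : ∀ v w : V, ({v, w} : Finset V) ∈ K → h v = h w → v = w) :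
    ∃ W : Set (Finset V × Finset V), IsDVF K W ∧ NoClosedVPath K W ∧
      (∀ v : V, ({v} : Finset V) ∈ K →
        ((∀ p ∈ W, p.1 ≠ ({v} : Finset V) ∧ p.2 ≠ ({v} : Finset V)) ↔
          (∀ w : V, ({v, w} : Finset V) ∈ K → w ≠ v → h v < h w))) ∧
      (∀ v : V, ({v} : Finset V) ∈ K →
        (∀ w : V, ({w} : Finset V) ∈ K → h v ≤ h w) →
        (∀ p ∈ W, p.1 ≠ ({v} : Finset V) ∧ p.2 ≠ ({v} : Finset V))) := by
  let S : Set V := {v | ∃ w, {v, w} ∈ K ∧ h w < h v}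
  choose! g hedge hlt using fun v (hv : v ∈ S) ↦ hv
  have hstrict {v w : V} (hvw : {v, w} ∈ K) (hne : w ≠ v) (hle : h v ≤ h w) : h v < h w :=
    hle.lt_of_ne fun heq ↦ hne (hinj v w hvw heq).symm
  have hcritical (v : V) : (∀ p ∈ vertexEdgeField S g, p.1 ≠ {v} ∧ p.2 ≠ {v}) ↔
      ∀ w, {v, w} ∈ K → w ≠ v → h v < h w := by
    rw [vertexEdgeField.forall_ne_singleton_iff]
    constructor
    · exact fun hv w hvw hne ↦ hstrict hvw hne (not_lt.1 fun hwv ↦ hv ⟨w, hvw, hwv⟩)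
    · rintro hmin ⟨w, hvw, hwv⟩
      exact lt_asymm hwv (hmin w hvw (ne_of_apply_ne h hwv.ne))
  refine ⟨vertexEdgeField S g, vertexEdgeField.isDVF hK hedge hlt,
    vertexEdgeField.noClosedVPath K hlt, fun v _ ↦ hcritical v, fun v _ hmin ↦ ?_⟩
  exact (hcritical v).2 fun w hvw hne ↦
    hstrict hvw hne (hmin w (hK.singleton_mem_of_pair_mem hvw).2)

/-- King–Knudson–Mramor, via ExtractRaw: given an injective function
`h` on the vertices of a finite complex `K`, there is a gradient vector field `W` on
`K` whose critical vertices are exactly the local minima of `h`; in particular the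
vertex at which `h` attains its minimum is critical. -/
theorem extractRaw_gradient_field_exists {V : Type*} [DecidableEq V]
    (K : Set (Finset V)) (hK : IsComplex K) (hfin : K.Finite)
    (h : V → ℝ)
    (hinj : ∀ v w : V, ({v} : Finset V) ∈ K → ({w} : Finset V) ∈ K →
      h v = h w → v = w) :
    ∃ W : Set (Finset V × Finset V), IsDVF K W ∧ NoClosedVPath K W ∧
      (∀ v : V, ({v} : Finset V) ∈ K →
        ((∀ p ∈ W, p.1 ≠ ({v} : Finset V) ∧ p.2 ≠ ({v} : Finset V)) ↔
          (∀ w : V, ({v, w} : Finset V) ∈ K → w ≠ v → h v < h w))) ∧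
      (∀ v : V, ({v} : Finset V) ∈ K →
        (∀ w : V, ({w} : Finset V) ∈ K → h v ≤ h w) →
        (∀ p ∈ W, p.1 ≠ ({v} : Finset V) ∧ p.2 ≠ ({v} : Finset V))) :=
  extractRaw_gradient_field_exists_general K hK h fun v w hvw ↦
    hinj v w (hK.singleton_mem_of_pair_mem hvw).1 (hK.singleton_mem_of_pair_mem hvw).2
end

section
/- Let f be a discrete Morse function on a finite abstract simplicial complex K and let V_f = {(α, β) : α ⋖ β and f(β) ≤ f(α)} be its gradient vector field. Then the modified Hasse diagram of (K, V_f) contains no nontrivial closed directed path (no directed cycle of positive length). -/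
/-!
Order the simplices by the value of `f`, breaking ties by reversed dimension. A downward edge
`β → α` of the modified Hasse diagram is unpaired, so it strictly decreases `f`; an upward edge
`α → β` of the gradient does not increase `f` and raises the dimension. Every edge therefore
strictly descends in this order, and a closed path is impossible.
-/

section

variable {V : Type*} {K : Set (Finset V)} {f : Finset V → ℝ} {σ τ : Finset V}

/-- The potential that strictly decreases along the modified Hasse diagram of a gradient: the value
of `f`, then the cardinality of the simplex in reversed order. The cardinality is dualized because
an edge along which `f` is constant goes up in dimension. -/
def hassePotential {R : Type*} (f : Finset V → R) (σ : Finset V) : R ×ₗ ℕᵒᵈ :=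
  toLex (f σ, OrderDual.toDual σ.card)

theorem CodimOneFace.card_lt (h : CodimOneFace σ τ) : σ.card < τ.card :=
  Nat.lt_of_succ_le h.2.ge

theorem CodimOneFace.lt_of_notMem_gradVF (h : CodimOneFace σ τ) (hσ : σ ∈ K) (hτ : τ ∈ K)
    (hnot : (σ, τ) ∉ gradVF K f) : f σ < f τ :=
  lt_of_not_ge fun hle => hnot ⟨hσ, hτ, h, hle⟩

theorem HasseEdge.hassePotential_lt (h : HasseEdge K (gradVF K f) σ τ) :
    hassePotential f τ < hassePotential f σ := by
  obtain ⟨hσ, hτ, ⟨hface, hnot⟩ | ⟨-, -, hface, hle⟩⟩ := h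
  · exact Prod.Lex.toLex_lt_toLex.2 (.inl (hface.lt_of_notMem_gradVF hτ hσ hnot))
  · exact Prod.Lex.toLex_lt_toLex'.2 ⟨hle, fun _ => OrderDual.toDual_lt_toDual.2 hface.card_lt⟩

end

theorem hasse_of_gradVF_acyclic_general {V : Type*} (K : Set (Finset V)) (f : Finset V → ℝ) :
    ¬ ∃ n : ℕ, 0 < n ∧ ∃ c : Fin (n + 1) → Finset V,
        (∀ i : Fin n, HasseEdge K (gradVF K f) (c i.castSucc) (c i.succ)) ∧
        c (Fin.last n) = c 0 := by
  rintro ⟨n, hn, c, hedge, hclosed⟩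
  have hanti : StrictAnti (hassePotential f ∘ c) :=
    Fin.strictAnti_iff_succ_lt.2 fun i => (hedge i).hassePotential_lt
  have hlt : hassePotential f (c (Fin.last n)) < hassePotential f (c 0) := hanti hn
  exact hlt.ne (congrArg (hassePotential f) hclosed)

/-- the modified Hasse diagram of the gradient vector field of a
discrete Morse function on a finite complex contains no directed cycle of positive
length. -/
theorem hasse_of_gradVF_acyclic {V : Type*} (K : Set (Finset V))
    (hK : IsComplex K) (hfin : K.Finite)
    (f : Finset V → ℝ) (hf : IsDiscreteMorse K f) :
    ¬ ∃ n : ℕ, 0 < n ∧ ∃ c : Fin (n + 1) → Finset V,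
        (∀ i : Fin n, HasseEdge K (gradVF K f) (c i.castSucc) (c i.succ)) ∧
        c (Fin.last n) = c 0 :=
  hasse_of_gradVF_acyclic_general K f
end
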